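/- arXiv:2309.08093 — 2 statements merged into one kernel-verified Lean document; each statement's English description precedes it below -/
import Mathlib

section
/- Fix $k \in [d]$ and let $S \in \mathbb{R}^{m \times \prod_{i \in [d]\setminus\{k\}} n_i}$ be the TensorSketch matrix generated by CountSketch matrices $S_i \in \mathbb{R}^{m \times n_i}$, $i \in [d]\setminus\{k\}$. Let $S_{<k}$ be the TensorSketch matrix generated by $\{S_i\}_{i<k}$ and $S_{>k}$ the TensorSketch matrix generated by $\{S_i\}_{i>k}$. Then for any matrices $G_{<k} \in \mathbb{R}^{n_1 \cdots n_{k-1} \times r_{k-1}}$ and $G_{>k} \in \mathbb{R}^{r_k \times n_{k+1}\cdots n_d}$, $S\,(G_{>k}^{\top} \otimes G_{<k}) = F^{-1}\,[(F S_{>k} G_{>k}^{\top}) \,\square\, (F S_{<k} G_{<k})]$, where $F \in \mathbb{C}^{m\times m}$ is the discrete Fourier transform matrix. -/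
open Matrix Complex

noncomputable def dft (m : ℕ) : Matrix (Fin m) (Fin m) ℂ :=
  Matrix.of fun s t : Fin m =>
    Complex.exp (-2 * Real.pi * Complex.I * ((s : ℕ) : ℂ) * ((t : ℕ) : ℂ) / (m : ℂ))

def countSketch {m : ℕ} {ι : Type*} (h : ι → Fin m) (v : ι → ℝ) :
    Matrix (Fin m) ι ℝ :=
  Matrix.of fun j i => if h i = j then v i else 0

def faceSplit {μ n₁ n₂ α : Type*} [Mul α] (D : Matrix μ n₂ α) (C : Matrix μ n₁ α) :
    Matrix μ (n₁ × n₂) α :=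
  Matrix.of fun s i => D s i.2 * C s i.1

def hashPair {m : ℕ} [NeZero m] {ι₁ ι₂ : Type*} (h₁ : ι₁ → Fin m) (h₂ : ι₂ → Fin m) :
    ι₁ × ι₂ → Fin m :=
  fun i => ⟨((h₁ i.1 : ℕ) + (h₂ i.2 : ℕ)) % m, Nat.mod_lt _ (Nat.pos_of_ne_zero (NeZero.ne m))⟩

def hashFam {m : ℕ} [NeZero m] {q : ℕ} {n : Fin q → ℕ} (h : ∀ k, Fin (n k) → Fin m) :
    (∀ k, Fin (n k)) → Fin m :=
  fun i => ⟨(∑ k, (h k (i k) : ℕ)) % m, Nat.mod_lt _ (Nat.pos_of_ne_zero (NeZero.ne m))⟩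

def ttChain (r n : ℕ → ℕ) {α : Type*} [Semiring α]
    (G : (j : ℕ) → Fin (n j) → Matrix (Fin (r j)) (Fin (r (j + 1))) α) :
    (p : ℕ) → ((j : Fin p) → Fin (n j)) → Matrix (Fin (r 0)) (Fin (r p)) α
  | 0, _ => 1
  | p + 1, i => ttChain r n G p (fun j => i j.castSucc) * G p (i (Fin.last p))

/-!
Every row `t ↦ ω ^ (s * t)` of the DFT matrix is a character of the cyclic group `Fin m`, and the
hash map of a TensorSketch adds the hash values of its factors in that group. So in Fourier space
each column of the sketch is the entrywise product of columns of the two smaller sketches, that is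
`F S = (F S_{>k}) □ (F S_{<k})`. The mixed-product rule
`(D □ C) (B ⊗ A) = (D B) □ (C A)` then pulls the Kronecker factors into the face-splitting product,
and `F` is invertible because it is a Vandermonde matrix with distinct nodes.
-/

/-- The primitive `m`-th root of unity `ω` with `dft m s t = ω ^ (s * t)`. The rows and columns of
`dft` are numbered from `0`, which absorbs the shifts by `1` in the paper's DFT matrix. -/
noncomputable def dftRoot (m : ℕ) : ℂ :=
  exp (-2 * Real.pi * I / m)

theorem isPrimitiveRoot_dftRoot (m : ℕ) [NeZero m] : IsPrimitiveRoot (dftRoot m) m := by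
  have h : dftRoot m = (exp (2 * Real.pi * I / m))⁻¹ := by
    rw [dftRoot, ← exp_neg]
    ring_nf
  exact h ▸ (isPrimitiveRoot_exp m (NeZero.ne m)).inv

theorem dft_apply_eq_pow {m : ℕ} (s t : Fin m) : dft m s t = (dftRoot m ^ (s : ℕ)) ^ (t : ℕ) := by
  rw [dft, of_apply, dftRoot, ← exp_nat_mul, ← exp_nat_mul]
  ring_nf

theorem dft_eq_vandermonde (m : ℕ) :
    dft m = vandermonde fun s : Fin m => dftRoot m ^ (s : ℕ) :=
  Matrix.ext dft_apply_eq_pow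

theorem isUnit_det_dft (m : ℕ) [NeZero m] : IsUnit (dft m).det := by
  rw [isUnit_iff_ne_zero, dft_eq_vandermonde, det_vandermonde_ne_zero_iff]
  exact fun s t hst => Fin.ext ((isPrimitiveRoot_dftRoot m).pow_inj s.isLt t.isLt hst)

theorem dft_apply_add {m : ℕ} [NeZero m] (s j k : Fin m) :
    dft m s (j + k) = dft m s j * dft m s k := by
  have hroot : (dftRoot m ^ (s : ℕ)) ^ m = 1 := by
    rw [pow_right_comm, (isPrimitiveRoot_dftRoot m).pow_eq_one, one_pow]
  simp only [dft_apply_eq_pow, Fin.val_add]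
  rw [← pow_eq_pow_mod _ hroot, pow_add]

theorem hashPair_apply {m : ℕ} [NeZero m] {ι₁ ι₂ : Type*} (h₁ : ι₁ → Fin m) (h₂ : ι₂ → Fin m)
    (i : ι₁ × ι₂) : hashPair h₁ h₂ i = h₁ i.1 + h₂ i.2 :=
  rfl

theorem mul_countSketch_apply {m : ℕ} {l ι : Type*} (A : Matrix l (Fin m) ℂ) (h : ι → Fin m)
    (v : ι → ℝ) (s : l) (i : ι) :
    (A * (countSketch h v).map ofReal) s i = A s (h i) * v i := by
  simp [mul_apply, countSketch, apply_ite ofReal]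

theorem dft_mul_countSketch_hashPair {m : ℕ} [NeZero m] {ι₁ ι₂ : Type*}
    (h₁ : ι₁ → Fin m) (v₁ : ι₁ → ℝ) (h₂ : ι₂ → Fin m) (v₂ : ι₂ → ℝ) :
    dft m * (countSketch (hashPair h₁ h₂) fun i => v₁ i.1 * v₂ i.2).map ofReal =
      faceSplit (dft m * (countSketch h₂ v₂).map ofReal)
        (dft m * (countSketch h₁ v₁).map ofReal) := by
  ext s i
  simp only [faceSplit, of_apply, mul_countSketch_apply, hashPair_apply, dft_apply_add, ofReal_mul]
  ring

section

open scoped Kronecker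

theorem faceSplit_mul_kronecker {μ n₁ n₂ p₁ p₂ α : Type*} [Fintype n₁] [Fintype n₂]
    [NonUnitalCommSemiring α] (D : Matrix μ n₂ α) (C : Matrix μ n₁ α) (A : Matrix n₁ p₁ α)
    (B : Matrix n₂ p₂ α) :
    faceSplit D C * (A ⊗ₖ B) = faceSplit (D * B) (C * A) := by
  ext s ⟨x, y⟩
  simp only [faceSplit, of_apply, mul_apply, kroneckerMap_apply]
  rw [Fintype.sum_prod_type_right, Finset.sum_mul_sum]
  refine Finset.sum_congr rfl fun j _ => Finset.sum_congr rfl fun i _ => ?_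
  rw [mul_comm (A i x), mul_mul_mul_comm]

theorem map_mul_kronecker {l m n p q α β F : Type*} [Fintype m] [Fintype n]
    [NonUnitalNonAssocSemiring α] [NonUnitalNonAssocSemiring β] [FunLike F α β]
    [NonUnitalRingHomClass F α β] (f : F) (M : Matrix l (m × n) α)
    (A : Matrix m p α) (B : Matrix n q α) :
    (M * (A ⊗ₖ B)).map f = M.map f * (A.map f ⊗ₖ B.map f) := by
  rw [Matrix.map_mul]
  congr 1
  ext
  exact map_mul f _ _

theorem tensorSketch_mul_interfaceKronecker_general {m : ℕ} [NeZero m] {ι₁ ι₂ κ₁ κ₂ : Type*}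
    [Fintype ι₁] [Fintype ι₂] (h₁ : ι₁ → Fin m) (v₁ : ι₁ → ℝ) (h₂ : ι₂ → Fin m) (v₂ : ι₂ → ℝ)
    (A : Matrix ι₁ κ₁ ℝ) (B : Matrix ι₂ κ₂ ℝ) :
    (countSketch (hashPair h₁ h₂) (fun i => v₁ i.1 * v₂ i.2) * (A ⊗ₖ B)).map ofReal =
      (dft m)⁻¹ *
        faceSplit (dft m * (countSketch h₂ v₂).map ofReal * B.map ofReal)
          (dft m * (countSketch h₁ v₁).map ofReal * A.map ofReal) := by
  let S := countSketch (hashPair h₁ h₂) fun i => v₁ i.1 * v₂ i.2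
  calc
    (S * (A ⊗ₖ B)).map ofReal
    _ = S.map ofReal * (A.map ofReal ⊗ₖ B.map ofReal) := map_mul_kronecker ofRealHom S A B
    _ = (dft m)⁻¹ * (dft m * S.map ofReal * (A.map ofReal ⊗ₖ B.map ofReal)) := by
      rw [Matrix.mul_assoc, nonsing_inv_mul_cancel_left _ _ (isUnit_det_dft m)]
    _ = _ := by rw [dft_mul_countSketch_hashPair, faceSplit_mul_kronecker]

end

/-- Theorem 3.4: fixing a mode `k`, with `p = k-1` modes below (dimensions
`a j`) and `q = d-k` modes above (dimensions `b j`), let `S` be the TensorSketch matrix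
generated by all the CountSketch matrices `S_i`, `i ∈ [d] \ {k}`, `S_{<k}` the TensorSketch
matrix generated by those below and `S_{>k}` the one generated by those above.  Then
`S (G_{>k}ᵀ ⊗ G_{<k}) = F⁻¹ [(F S_{>k} G_{>k}ᵀ) □ (F S_{<k} G_{<k})]`.  (The row of the
Kronecker product at multi-index `(i_{<k}, i_{>k})` is `G_{>k}ᵀ(i_{>k},:) ⊗ G_{<k}(i_{<k},:)`.) -/
theorem tensorSketch_mul_interfaceKronecker
    {m p q rkm rk : ℕ} [NeZero m] {a : Fin p → ℕ} {b : Fin q → ℕ}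
    (hlt : ∀ j, Fin (a j) → Fin m) (vlt : ∀ j, Fin (a j) → ℝ)
    (hgt : ∀ j, Fin (b j) → Fin m) (vgt : ∀ j, Fin (b j) → ℝ)
    (hvlt : ∀ j i, vlt j i = 1 ∨ vlt j i = -1) (hvgt : ∀ j i, vgt j i = 1 ∨ vgt j i = -1)
    (S : Matrix (Fin m) ((∀ j, Fin (a j)) × (∀ j, Fin (b j))) ℝ)
    (hS : S = countSketch (hashPair (hashFam hlt) (hashFam hgt))
      (fun i => (∏ j, vlt j (i.1 j)) * ∏ j, vgt j (i.2 j)))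
    (Slt : Matrix (Fin m) (∀ j, Fin (a j)) ℝ)
    (hSlt : Slt = countSketch (hashFam hlt) (fun i => ∏ j, vlt j (i j)))
    (Sgt : Matrix (Fin m) (∀ j, Fin (b j)) ℝ)
    (hSgt : Sgt = countSketch (hashFam hgt) (fun i => ∏ j, vgt j (i j)))
    (Glt : Matrix (∀ j, Fin (a j)) (Fin rkm) ℝ)
    (Ggt : Matrix (Fin rk) (∀ j, Fin (b j)) ℝ) :
    (S * Matrix.kroneckerMap (· * ·) Glt Ggtᵀ).map Complex.ofReal =
      (dft m)⁻¹ *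
        faceSplit (dft m * Sgt.map Complex.ofReal * (Ggtᵀ).map Complex.ofReal)
                  (dft m * Slt.map Complex.ofReal * Glt.map Complex.ofReal) := by
  subst hS hSlt hSgt
  exact tensorSketch_mul_interfaceKronecker_general (hashFam hlt) (fun i => ∏ j, vlt j (i j))
    (hashFam hgt) (fun i => ∏ j, vgt j (i j)) Glt Ggtᵀ
end

section
/- Let $\mathcal{G}_{k+1} \in \mathbb{R}^{r_k \times n_{k+1} \times r_{k+1}}, \ldots, \mathcal{G}_d \in \mathbb{R}^{r_{d-1} \times n_d \times 1}$ be TT-cores and let $G_{>k} \in \mathbb{R}^{r_k \times n_{k+1}\cdots n_d}$ be the matrix whose column indexed by $(i_{k+1}, \ldots, i_d)$ equals the product $\mathcal{G}_{k+1}(i_{k+1})\cdots\mathcal{G}_d(i_d)$. Let $S_{>k} \in \mathbb{R}^{m \times n_{k+1}\cdots n_d}$ be the TensorSketch matrix generated by CountSketch matrices $S_{k+1}, \ldots, S_d$ with $S_j \in \mathbb{R}^{m \times n_j}$, and $F \in \mathbb{C}^{m\times m}$ the DFT matrix. Then $F S_{>k} G_{>k}^{\top} = \left[\left((\mathcal{G}_{k+1}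 \times_2 F S_{k+1}) \star (\mathcal{G}_{k+2} \times_2 F S_{k+2}) \star \cdots \star (\mathcal{G}_d \times_2 F S_d)\right)^{\mathrm{R}}\right]^{\top}$, where $[\cdot]^{\mathrm{R}}$ denotes the right unfolding of a third-order tensor. -/
open Matrix Complex

/-- The complex third-order tensor `𝒢_j ×₂ (F S_j)` (2-mode product of the TT-core `𝒢_j`
with the DFT-transformed CountSketch matrix `F S_j`), presented by its lateral slices:
`(𝒢_j ×₂ F S_j)(s) = ∑ i, (F S_j)(s,i) • 𝒢_j(i)`. -/
noncomputable def modeCore {m : ℕ} (r n : ℕ → ℕ)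
    (G : (j : ℕ) → Fin (n j) → Matrix (Fin (r j)) (Fin (r (j + 1))) ℝ)
    (h : (j : ℕ) → Fin (n j) → Fin m) (v : (j : ℕ) → Fin (n j) → ℝ) :
    (j : ℕ) → Fin m → Matrix (Fin (r j)) (Fin (r (j + 1))) ℂ :=
  fun j s => Matrix.of fun x y =>
    ∑ i, (dft m * (countSketch (h j) (v j)).map Complex.ofReal) s i * ((G j i x y : ℝ) : ℂ)

/-! Each row of the DFT matrix is a character of `ZMod m`, and TensorSketch combines hash values by
adding them in `ZMod m`; hence `F S_{>k}` is the row-wise Khatri–Rao product of the `F S_j`. On the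
tensor-train side, slice-wise products of 2-mode products expand by multilinearity into a sum over
multi-indices, whose weights are exactly the entries of that Khatri–Rao product. -/

theorem mul_map_countSketch_apply {κ ι R : Type*} [NonUnitalNonAssocSemiring R] {m : ℕ}
    (M : Matrix κ (Fin m) R) {f : ℝ → R} (hf : f 0 = 0) (h : ι → Fin m) (v : ι → ℝ)
    (s : κ) (i : ι) : (M * (countSketch h v).map f) s i = M s (h i) * f (v i) := by
  simp [Matrix.mul_apply, countSketch, apply_ite f, hf]

theorem addChar_map_sum {ι A M : Type*} [AddCommMonoid A] [CommMonoid M] (ψ : AddChar A M)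
    (t : Finset ι) (f : ι → A) : ψ (∑ i ∈ t, f i) = ∏ i ∈ t, ψ (f i) :=
  map_prod ψ.toMonoidHom (fun i => Multiplicative.ofAdd (f i)) t

section Dft

variable {m : ℕ} [NeZero m]

theorem dft_apply_eq_stdAddChar (s t : Fin m) :
    dft m s t = ZMod.stdAddChar (-((s : ℕ) : ZMod m) * ((t : ℕ) : ZMod m)) := by
  have hcast : -((s : ℕ) : ZMod m) * ((t : ℕ) : ZMod m) = ((-(s : ℕ) * (t : ℕ) : ℤ) : ZMod m) := by
    push_cast
    rfl
  rw [hcast, ZMod.stdAddChar_coe]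
  simp only [dft, Matrix.of_apply]
  congr 1
  push_cast
  ring

variable {q : ℕ} {n : Fin q → ℕ}

theorem natCast_hashFam (h : ∀ k, Fin (n k) → Fin m) (i : ∀ k, Fin (n k)) :
    ((hashFam h i : ℕ) : ZMod m) = ∑ k, ((h k (i k) : ℕ) : ZMod m) := by
  simp [hashFam]

theorem dft_hashFam (h : ∀ k, Fin (n k) → Fin m) (s : Fin m) (i : ∀ k, Fin (n k)) :
    dft m s (hashFam h i) = ∏ k, dft m s (h k (i k)) := by
  simp only [dft_apply_eq_stdAddChar, natCast_hashFam, Finset.mul_sum, addChar_map_sum]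

theorem dft_mul_tensorSketch_apply (h : ∀ k, Fin (n k) → Fin m) (v : ∀ k, Fin (n k) → ℝ)
    (s : Fin m) (i : ∀ k, Fin (n k)) :
    (dft m * (countSketch (hashFam h) fun i => ∏ k, v k (i k)).map Complex.ofReal) s i =
      ∏ k, (dft m * (countSketch (h k) (v k)).map Complex.ofReal) s (i k) := by
  simp only [mul_map_countSketch_apply _ Complex.ofReal_zero, dft_hashFam, Complex.ofReal_prod,
    Finset.prod_mul_distrib]

end Dft

/-- The 2-mode product `𝒢 ×₂ M` of a third-order tensor with a matrix, both tensors being given by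
their lateral slices. -/
def modeProd {κ ι ρ ρ' α : Type*} [Fintype ι] [NonUnitalNonAssocSemiring α]
    (G : ι → Matrix ρ ρ' α) (M : Matrix κ ι α) : κ → Matrix ρ ρ' α :=
  fun s => ∑ i, M s i • G i

theorem modeCore_eq_modeProd {m : ℕ} (r n : ℕ → ℕ)
    (G : (j : ℕ) → Fin (n j) → Matrix (Fin (r j)) (Fin (r (j + 1))) ℝ)
    (h : (j : ℕ) → Fin (n j) → Fin m) (v : (j : ℕ) → Fin (n j) → ℝ) :
    modeCore r n G h v = fun j => modeProd (fun i => (G j i).map Complex.ofReal)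
      (dft m * (countSketch (h j) (v j)).map Complex.ofReal) := by
  ext j s x y
  simp [modeCore, modeProd, Matrix.sum_apply]

theorem ttChain_map {α β : Type*} [Semiring α] [Semiring β] (f : α →+* β) (r n : ℕ → ℕ)
    (G : (j : ℕ) → Fin (n j) → Matrix (Fin (r j)) (Fin (r (j + 1))) α)
    (p : ℕ) (i : (j : Fin p) → Fin (n j)) :
    ttChain r n (fun j i => (G j i).map f) p i = (ttChain r n G p i).map f := by
  induction p with
  | zero => simp [ttChain]
  | succ p ih => simp only [ttChain, ih, Matrix.map_mul]

theorem ttChain_modeProd {α : Type*} [CommSemiring α] (r n N : ℕ → ℕ)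
    (G : (j : ℕ) → Fin (n j) → Matrix (Fin (r j)) (Fin (r (j + 1))) α)
    (M : (j : ℕ) → Matrix (Fin (N j)) (Fin (n j)) α)
    (p : ℕ) (s : (j : Fin p) → Fin (N j)) :
    ttChain r N (fun j => modeProd (G j) (M j)) p s =
      ∑ i : (j : Fin p) → Fin (n j), (∏ j : Fin p, M j (s j) (i j)) • ttChain r n G p i := by
  induction p with
  | zero => simp [ttChain]
  | succ p ih =>
    calc ttChain r N (fun j => modeProd (G j) (M j)) (p + 1) s
        = (∑ i : (j : Fin p) → Fin (n j),
            (∏ j : Fin p, M j (s j.castSucc) (i j)) • ttChain r n G p i) *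
              ∑ k, M p (s (Fin.last p)) k • G p k := by
          rw [ttChain, ih]
          rfl
      _ = ∑ k, ∑ i : (j : Fin p) → Fin (n j),
            ((∏ j : Fin p, M j (s j.castSucc) (i j)) * M p (s (Fin.last p)) k) •
              (ttChain r n G p i * G p k) := by
          simp only [Matrix.mul_sum, Matrix.sum_mul, Matrix.smul_mul, Matrix.mul_smul,
            Finset.smul_sum, smul_smul, mul_comm]
      _ = _ := by
          rw [← (Fin.snocEquiv fun j : Fin (p + 1) => Fin (n j)).sum_comp, Fintype.sum_prod_type]
          simp [ttChain, Fin.prod_univ_castSucc]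

theorem dft_tensorSketch_interfaceRight_eq_sliceChain_general {m : ℕ} [NeZero m] (r n : ℕ → ℕ)
    (G : (j : ℕ) → Fin (n j) → Matrix (Fin (r j)) (Fin (r (j + 1))) ℝ)
    (h : (j : ℕ) → Fin (n j) → Fin m) (v : (j : ℕ) → Fin (n j) → ℝ) (p : ℕ)
    (s : Fin m) (a : Fin (r 0)) (b : Fin (r p)) :
    (dft m * (countSketch (hashFam (n := fun j : Fin p => n j) fun j => h j)
        fun i => ∏ j : Fin p, v j (i j)).map Complex.ofReal *
      ((Matrix.of fun a i => ttChain r n G p i a b).map Complex.ofReal)ᵀ) s a =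
        ttChain r (fun _ => m) (modeCore r n G h v) p (fun _ => s) a b := by
  have hmap (i) : ttChain r n (fun j i => (G j i).map Complex.ofReal) p i =
      (ttChain r n G p i).map Complex.ofReal := ttChain_map Complex.ofRealHom r n G p i
  rw [Matrix.mul_apply, modeCore_eq_modeProd, ttChain_modeProd, Matrix.sum_apply]
  refine Finset.sum_congr rfl fun i _ => ?_
  rw [dft_mul_tensorSketch_apply _ fun j : Fin p => v j, hmap]
  rfl

/-- Theorem 3.5, second identity: for TT-cores
`𝒢_{k+1} ∈ ℝ^{r_k×n_{k+1}×r_{k+1}}, …, 𝒢_d ∈ ℝ^{r_{d-1}×n_d×1}` (here relabelled as `p = d-k`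
cores with ranks `r 0 = r_k` and `r p = 1`), the matrix `G_{>k}` whose column at
`(i_{k+1},…,i_d)` is `𝒢_{k+1}(i_{k+1})⋯𝒢_d(i_d)`, and the TensorSketch matrix `S_{>k}`
generated by CountSketch matrices `S_{k+1},…,S_d`, one has
`F S_{>k} G_{>k}ᵀ = [((𝒢_{k+1} ×₂ F S_{k+1}) ⋆ ⋯ ⋆ (𝒢_d ×₂ F S_d))^R]ᵀ`; the transposed
right unfolding is expressed entrywise via the identification `Fin m × Fin (r p) ≃ Fin m`
given by `r p = 1`: its `((s,b), a)` entry is the `(a,b)` entry of the `s`-th slice of the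
slice-wise product. -/
theorem dft_tensorSketch_interfaceRight_eq_sliceChain
    {m p : ℕ} [NeZero m] (r n : ℕ → ℕ) (hrp : r p = 1)
    (G : (j : ℕ) → Fin (n j) → Matrix (Fin (r j)) (Fin (r (j + 1))) ℝ)
    (h : (j : ℕ) → Fin (n j) → Fin m) (v : (j : ℕ) → Fin (n j) → ℝ)
    (hv : ∀ j i, v j i = 1 ∨ v j i = -1)
    (Ggt : Matrix (Fin (r 0)) ((j : Fin p) → Fin (n j)) ℝ)
    (hGgt : ∀ (a : Fin (r 0)) i (b : Fin (r p)), Ggt a i = ttChain r n G p i a b)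
    (Sgt : Matrix (Fin m) ((j : Fin p) → Fin (n j)) ℝ)
    (hSgt : Sgt = countSketch (hashFam (n := fun j : Fin p => n j) (fun j => h j))
      (fun i => ∏ j : Fin p, v (↑j) (i j))) :
    ∀ (s : Fin m) (b : Fin (r p)) (a : Fin (r 0)),
      (dft m * Sgt.map Complex.ofReal * (Ggt.map Complex.ofReal)ᵀ) s a =
        ttChain r (fun _ => m) (modeCore r n G h v) p (fun _ => s) a b := by
  intro s b a
  have hcol : Ggt = Matrix.of fun a i => ttChain r n G p i a b := by
    ext a i
    exact hGgt a i b
  rw [hSgt, hcol, dft_tensorSketch_interfaceRight_eq_sliceChain_general]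
end
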